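/- Let n ∈ ℕ with n ≥ 1 and let q ∈ (1, 2). Then there exists ξ > −1/2 such that, setting F(λ) = ∫_{[−1,1]} ∫_{[−1,1]^n} ∫_{[−1,1]^n} |t|^ξ · (∏_{j=1}^n |x_j|^ξ) · (∏_{j=1}^n |y_j|^ξ) · e^{iλt} · e^{−|λ|(|x|² + |y|²)/4} dx dy dt for λ ∈ ℝ \ {0}, one has ∫_{ℝ \ {0}} |F(λ)|^q |λ|^n dλ = +∞. -/

import Mathlib

/-!
The coefficient factors as `F(lam) = A(lam) * B(lam) ^ (2 * n)`, where
`A(lam) = ∫_{-1}^{1} |t|^ξ e^{i lam t} dt` and `B(lam) = ∫_{-1}^{1} |x|^ξ e^{-|lam| x² / 4} dx`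
(`heisenbergCoeff_eq`). For large `lam` one has `B(lam) ≥ b * lam ^ (-(ξ + 1) / 2)`
(`gaussian_lower`), and for `-1 < ξ < 0` also `|A(lam)| ≥ 2 * c * lam ^ (-(ξ + 1))` with `c > 0`.
Hence `|F(lam)| ^ q * lam ^ n` is at least a constant times
`lam ^ (n - q * (ξ + 1) * (n + 1))`. The choice `ξ = 1 / q - 1`, which lies in `(-1/2, 0)` because
`1 < q < 2`, makes this exponent `-1`, so the integral diverges logarithmically.

The bound on `A` reduces by scaling to a lower bound for `∫_0^R s^ξ cos s ds`
(`norm_oscillatory_lower`). Integrating by parts twice (`integral_rpow_mul_cos`) writes it as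
`R^ξ sin R - ξ R^(ξ-1) (1 - cos R) + ξ (ξ - 1) ∫_0^R s^(ξ-2) (1 - cos s) ds`: the first term
tends to `0`, the second is nonnegative, and the third is increasing in `R` and positive
(`exists_integral_rpow_mul_cos_lower`).
-/

open MeasureTheory

/-- The matrix coefficient `⟨ĝ_ξ(λ) φ₀^λ, φ₀^λ⟩` of the group Fourier transform on the
Heisenberg group `ℍⁿ` of the function `g_ξ(x+iy,t) = |t|^ξ ∏_j |x_j|^ξ ∏_j |y_j|^ξ` on the
cube `[−1,1]^{2n+1}`. -/
noncomputable def heisenbergCoeff (n : ℕ) (ξ : ℝ) (lam : ℝ) : ℂ :=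
  ∫ t in Set.Icc (-1 : ℝ) 1,
    ∫ x in Set.pi Set.univ fun _ : Fin n => Set.Icc (-1 : ℝ) 1,
      ∫ y in Set.pi Set.univ fun _ : Fin n => Set.Icc (-1 : ℝ) 1,
        ((|t| ^ ξ * (∏ j, |x j| ^ ξ) * ∏ j, |y j| ^ ξ : ℝ) : ℂ)
          * Complex.exp (Complex.I * lam * t)
          * ((Real.exp (-(|lam| * ((∑ j, x j ^ 2) + ∑ j, y j ^ 2)) / 4) : ℝ) : ℂ)

/-- By Fubini the coefficient is the one-dimensional oscillatory integral in `t` times the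
`2n`-th power of a one-dimensional truncated Gaussian moment. -/
lemma heisenbergCoeff_eq (n : ℕ) (ξ lam : ℝ) :
    heisenbergCoeff n ξ lam =
      (∫ t in Set.Icc (-1 : ℝ) 1, ((|t| ^ ξ : ℝ) : ℂ) * Complex.exp (Complex.I * lam * t)) *
        (((∫ x in Set.Icc (-1 : ℝ) 1, |x| ^ ξ * Real.exp (-(|lam| * x ^ 2) / 4)) ^ n) ^ 2 : ℝ) := by
  have hpi : ∀ f : ℝ → ℝ,
      ∫ x in Set.pi Set.univ fun _ : Fin n => Set.Icc (-1 : ℝ) 1, ((∏ j, f (x j) : ℝ) : ℂ) =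
        (((∫ x in Set.Icc (-1 : ℝ) 1, f x) ^ n : ℝ) : ℂ) := by
    intro f
    rw [integral_complex_ofReal, volume_pi, Measure.restrict_pi_pi,
      integral_fintype_prod_eq_prod (𝕜 := ℝ) (fun _ => f)]
    simp
  set g : ℝ → ℝ := fun x => |x| ^ ξ * Real.exp (-(|lam| * x ^ 2) / 4) with hg
  have hint : ∀ (t : ℝ) (x y : Fin n → ℝ),
      ((|t| ^ ξ * (∏ j, |x j| ^ ξ) * ∏ j, |y j| ^ ξ : ℝ) : ℂ)
          * Complex.exp (Complex.I * lam * t)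
          * ((Real.exp (-(|lam| * ((∑ j, x j ^ 2) + ∑ j, y j ^ 2)) / 4) : ℝ) : ℂ) =
      ((((|t| ^ ξ : ℝ) : ℂ) * Complex.exp (Complex.I * lam * t)) * ((∏ j, g (x j) : ℝ) : ℂ)) *
        ((∏ j, g (y j) : ℝ) : ℂ) := by
    intro t x y
    have hexp : Real.exp (-(|lam| * ((∑ j, x j ^ 2) + ∑ j, y j ^ 2)) / 4) =
        (∏ j, Real.exp (-(|lam| * x j ^ 2) / 4)) * ∏ j, Real.exp (-(|lam| * y j ^ 2) / 4) := by
      rw [← Real.exp_sum, ← Real.exp_sum, ← Real.exp_add]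
      congr 1
      rw [← Finset.sum_div, ← Finset.sum_div, Finset.sum_neg_distrib, Finset.sum_neg_distrib,
        ← Finset.mul_sum, ← Finset.mul_sum]
      ring
    rw [hexp, hg]
    simp only [Finset.prod_mul_distrib]
    push_cast
    ring
  unfold heisenbergCoeff
  simp_rw [hint, integral_const_mul, hpi g, integral_mul_const, integral_const_mul, hpi g,
    integral_mul_const]
  push_cast
  ring

lemma integrableOn_abs_rpow {ξ : ℝ} (hξ : -1 < ξ) :
    IntegrableOn (fun x : ℝ => |x| ^ ξ) (Set.Icc (-1) 1) := by
  have h0 : IntegrableOn (fun x : ℝ => x ^ ξ) (Set.Ioc 0 1) :=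
    (intervalIntegrable_iff_integrableOn_Ioc_of_le zero_le_one).1
      (intervalIntegral.intervalIntegrable_rpow' hξ)
  have h1 : IntervalIntegrable (fun x : ℝ => |x| ^ ξ) volume 0 1 := by
    rw [intervalIntegrable_iff_integrableOn_Ioc_of_le zero_le_one]
    refine h0.congr_fun (fun x hx => ?_) measurableSet_Ioc
    simp only [abs_of_pos hx.1]
  have h2 : IntervalIntegrable (fun x : ℝ => |x| ^ ξ) volume (-1) 0 := by
    have := ((IntervalIntegrable.iff_comp_neg (by simp)).1 h1).symm
    simpa using this
  have := h2.trans h1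
  rwa [intervalIntegrable_iff_integrableOn_Icc_of_le (by norm_num)] at this

/-- Lower bound for the Gaussian moment, from the part `0 < x ≤ lam ^ (-1/2)` of the domain, where
the Gaussian factor is at least `exp (-1/4)`. -/
lemma gaussian_lower {ξ lam : ℝ} (hξ : -1 < ξ) (hl : 1 ≤ lam) :
    Real.exp (-(1 / 4)) / (ξ + 1) * lam ^ (-((ξ + 1) / 2)) ≤
      ∫ x in Set.Icc (-1 : ℝ) 1, |x| ^ ξ * Real.exp (-(|lam| * x ^ 2) / 4) := by
  have hl0 : 0 < lam := by linarith
  set r : ℝ := lam ^ (-(1 / 2) : ℝ) with hr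
  have hr0 : 0 < r := Real.rpow_pos_of_pos hl0 _
  have hr1 : r ≤ 1 := Real.rpow_le_one_of_one_le_of_nonpos hl (by norm_num)
  have hr2 : lam * r ^ 2 = 1 := by
    rw [hr, ← Real.rpow_natCast, ← Real.rpow_mul hl0.le]
    norm_num [Real.rpow_neg_one]
    field_simp
  have hint : IntegrableOn (fun x : ℝ => |x| ^ ξ * Real.exp (-(|lam| * x ^ 2) / 4))
      (Set.Icc (-1) 1) :=
    (integrableOn_abs_rpow hξ).mul_continuousOn (by fun_prop) isCompact_Icc
  have hsub : Set.Ioc 0 r ⊆ Set.Icc (-1 : ℝ) 1 := fun x hx =>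
    ⟨by linarith [hx.1], hx.2.trans hr1⟩
  have hval : ∫ x in Set.Ioc 0 r, x ^ ξ * Real.exp (-(1 / 4)) =
      Real.exp (-(1 / 4)) / (ξ + 1) * lam ^ (-((ξ + 1) / 2)) := by
    rw [integral_mul_const, ← intervalIntegral.integral_of_le hr0.le,
      integral_rpow (Or.inl hξ), Real.zero_rpow (by linarith), hr, ← Real.rpow_mul hl0.le]
    rw [show -(1 / 2 : ℝ) * (ξ + 1) = -((ξ + 1) / 2) by ring]
    ring
  rw [← hval]
  calc ∫ x in Set.Ioc 0 r, x ^ ξ * Real.exp (-(1 / 4))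
      ≤ ∫ x in Set.Ioc 0 r, |x| ^ ξ * Real.exp (-(|lam| * x ^ 2) / 4) := by
        refine setIntegral_mono_on ?_ (hint.mono_set hsub) measurableSet_Ioc fun x hx => ?_
        · exact ((intervalIntegrable_iff_integrableOn_Ioc_of_le hr0.le).1
            (intervalIntegral.intervalIntegrable_rpow' hξ)).mul_const _
        · rw [abs_of_pos hx.1, abs_of_pos hl0]
          have : lam * x ^ 2 ≤ lam * r ^ 2 := by
            have := hx.1.le
            have := hx.2
            gcongr
          have := Real.rpow_nonneg hx.1.le ξ
          gcongr
          linarith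
    _ ≤ _ := setIntegral_mono_set hint
        (Filter.Eventually.of_forall fun x => by simp only [Pi.zero_apply]; positivity)
        hsub.eventuallyLE

/-- Integrable at `0` since `1 - cos s ≤ s ^ 2`. -/
lemma intervalIntegrable_rpow_mul_one_sub_cos {ξ : ℝ} (hξ : -1 < ξ) {R : ℝ} (hR : 0 ≤ R) :
    IntervalIntegrable (fun s : ℝ => s ^ (ξ - 2) * (1 - Real.cos s)) volume 0 R := by
  rw [intervalIntegrable_iff_integrableOn_Ioc_of_le hR]
  have h0 : IntegrableOn (fun x : ℝ => x ^ ξ) (Set.Ioc 0 R) :=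
    (intervalIntegrable_iff_integrableOn_Ioc_of_le hR).1
      (intervalIntegral.intervalIntegrable_rpow' hξ)
  refine Integrable.mono' h0 (by fun_prop) ?_
  refine (ae_restrict_iff' measurableSet_Ioc).2 (Filter.Eventually.of_forall fun s hs => ?_)
  have hs0 := hs.1
  have h1 : 0 ≤ 1 - Real.cos s := by linarith [Real.cos_le_one s]
  have h2 : 1 - Real.cos s ≤ s ^ 2 := by
    nlinarith [Real.one_sub_sq_div_two_le_cos (x := s), sq_nonneg s]
  have h3 := Real.rpow_pos_of_pos hs0 (ξ - 2)
  rw [Real.norm_of_nonneg (by positivity)]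
  calc s ^ (ξ - 2) * (1 - Real.cos s) ≤ s ^ (ξ - 2) * s ^ 2 := by gcongr
    _ = s ^ ξ := by
      rw [← Real.rpow_natCast, ← Real.rpow_add hs0]; norm_num

/-- Two integrations by parts, with `sin` and then `1 - cos` as primitives so that the boundary
terms at `0` vanish. The remaining integrand is nonnegative, which makes the sign of the
oscillatory integral visible. -/
lemma integral_rpow_mul_cos {ξ : ℝ} (hξ : -1 < ξ) {R : ℝ} (hR : 0 ≤ R) :
    ∫ s in (0:ℝ)..R, s ^ ξ * Real.cos s =
      R ^ ξ * Real.sin R - ξ * R ^ (ξ - 1) * (1 - Real.cos R) +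
        ξ * (ξ - 1) * ∫ s in (0:ℝ)..R, s ^ (ξ - 2) * (1 - Real.cos s) := by
  have hi1 : IntervalIntegrable (fun s : ℝ => s ^ ξ * Real.cos s) volume 0 R :=
    (intervalIntegral.intervalIntegrable_rpow' hξ).mul_continuousOn (by fun_prop)
  have hi2 := (intervalIntegrable_rpow_mul_one_sub_cos hξ hR).const_mul (ξ * (ξ - 1))
  have hcont : ContinuousOn
      (fun s : ℝ => s ^ ξ * Real.sin s - ξ * s ^ (ξ - 1) * (1 - Real.cos s)) (Set.Icc 0 R) := by
    intro s hs
    rcases hs.1.eq_or_lt with rfl | hs0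
    -- At the origin both terms are `O(s ^ (ξ + 1))`; the junk values of `0 ^ ξ` and
    -- `0 ^ (ξ - 1)` are killed by `sin 0 = 1 - cos 0 = 0`.
    · have hlim : Filter.Tendsto (fun s : ℝ => (1 + |ξ|) * s ^ (ξ + 1))
          (nhdsWithin 0 (Set.Icc 0 R)) (nhds 0) := by
        have : ContinuousAt (fun s : ℝ => (1 + |ξ|) * s ^ (ξ + 1)) 0 :=
          continuousAt_const.mul (Real.continuousAt_rpow_const _ _ (Or.inr (by linarith)))
        have h := this.tendsto
        rw [Real.zero_rpow (by linarith), mul_zero] at h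
        exact h.mono_left nhdsWithin_le_nhds
      have h0 : (0:ℝ) ^ ξ * Real.sin 0 - ξ * (0:ℝ) ^ (ξ - 1) * (1 - Real.cos 0) = 0 := by simp
      unfold ContinuousWithinAt
      beta_reduce
      rw [h0]
      refine squeeze_zero_norm' ?_ hlim
      filter_upwards [self_mem_nhdsWithin] with s hs
      rcases hs.1.eq_or_lt with rfl | hs0
      · rw [h0, norm_zero, Real.zero_rpow (by linarith)]; simp
      have h1 : 0 ≤ 1 - Real.cos s := by linarith [Real.cos_le_one s]
      have h2 : 1 - Real.cos s ≤ s ^ 2 := by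
        nlinarith [Real.one_sub_sq_div_two_le_cos (x := s), sq_nonneg s]
      have h3 : |Real.sin s| ≤ s := by
        simpa [abs_of_pos hs0] using Real.abs_sin_le_abs (x := s)
      have e1 : s ^ ξ * s = s ^ (ξ + 1) := by rw [Real.rpow_add_one hs0.ne']
      have e2 : s ^ (ξ - 1) * s ^ 2 = s ^ (ξ + 1) := by
        rw [← Real.rpow_natCast, ← Real.rpow_add hs0]; norm_num; ring_nf
      have p1 := Real.rpow_pos_of_pos hs0 ξ
      have p2 := Real.rpow_pos_of_pos hs0 (ξ - 1)
      rw [Real.norm_eq_abs]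
      calc |s ^ ξ * Real.sin s - ξ * s ^ (ξ - 1) * (1 - Real.cos s)|
          ≤ |s ^ ξ * Real.sin s| + |ξ * s ^ (ξ - 1) * (1 - Real.cos s)| := abs_sub _ _
        _ = s ^ ξ * |Real.sin s| + |ξ| * (s ^ (ξ - 1) * (1 - Real.cos s)) := by
          rw [abs_mul, abs_mul, abs_mul, abs_of_pos p1, abs_of_pos p2, abs_of_nonneg h1, mul_assoc]
        _ ≤ s ^ ξ * s + |ξ| * (s ^ (ξ - 1) * s ^ 2) := by gcongr
        _ = _ := by rw [e1, e2]; ring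
    · have c1 : ContinuousAt (fun s : ℝ => s ^ ξ) s :=
        Real.continuousAt_rpow_const _ _ (Or.inl hs0.ne')
      have c2 : ContinuousAt (fun s : ℝ => s ^ (ξ - 1)) s :=
        Real.continuousAt_rpow_const _ _ (Or.inl hs0.ne')
      exact ContinuousAt.continuousWithinAt (by fun_prop)
  have hderiv : ∀ s ∈ Set.Ioo 0 R, HasDerivAt
      (fun s : ℝ => s ^ ξ * Real.sin s - ξ * s ^ (ξ - 1) * (1 - Real.cos s))
      (s ^ ξ * Real.cos s - ξ * (ξ - 1) * (s ^ (ξ - 2) * (1 - Real.cos s))) s := by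
    intro s hs
    have d1 := Real.hasDerivAt_rpow_const (p := ξ) (Or.inl hs.1.ne')
    have d2 := Real.hasDerivAt_rpow_const (p := ξ - 1) (Or.inl hs.1.ne')
    have d := (d1.mul (Real.hasDerivAt_sin s)).sub
      ((d2.const_mul ξ).mul ((Real.hasDerivAt_cos s).const_sub 1))
    refine d.congr_deriv ?_
    rw [show ξ - 1 - 1 = ξ - 2 by ring]
    ring
  have h := intervalIntegral.integral_eq_sub_of_hasDerivAt_of_le hR hcont hderiv (hi1.sub hi2)
  rw [intervalIntegral.integral_sub hi1 hi2, intervalIntegral.integral_const_mul] at h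
  simp only [Real.sin_zero, Real.cos_zero, sub_self, mul_zero, sub_zero] at h
  linarith

lemma exists_integral_rpow_mul_cos_lower {ξ : ℝ} (hξ : -1 < ξ) (hξ0 : ξ < 0) :
    ∃ c > 0, ∃ R₀, 1 ≤ R₀ ∧ ∀ R, R₀ ≤ R → c ≤ ∫ s in (0:ℝ)..R, s ^ ξ * Real.cos s := by
  set c₀ : ℝ := ∫ s in (0:ℝ)..1, s ^ (ξ - 2) * (1 - Real.cos s) with hc₀
  have hpos : 0 < c₀ := by
    refine intervalIntegral.intervalIntegral_pos_of_pos_on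
      (intervalIntegrable_rpow_mul_one_sub_cos hξ zero_le_one) (fun s hs => ?_) one_pos
    have h1 := Real.rpow_pos_of_pos hs.1 (ξ - 2)
    have h2 : Real.cos s < 1 := by
      have := Real.cos_lt_cos_of_nonneg_of_le_pi_div_two le_rfl
        (by linarith [hs.2, Real.pi_gt_three] : s ≤ Real.pi / 2) hs.1
      simpa using this
    have : 0 < 1 - Real.cos s := by linarith
    positivity
  have hk : 0 < ξ * (ξ - 1) := by nlinarith
  have hC : 0 < ξ * (ξ - 1) * c₀ := by positivity
  have hlim : ∀ᶠ R in Filter.atTop, R ^ ξ < ξ * (ξ - 1) * c₀ / 2 := by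
    have := tendsto_rpow_neg_atTop (y := -ξ) (by linarith)
    rw [neg_neg] at this
    exact this.eventually_lt_const (by positivity)
  obtain ⟨R₁, hR₁⟩ := Filter.eventually_atTop.1 hlim
  refine ⟨ξ * (ξ - 1) * c₀ / 2, by positivity, max R₁ 1, le_max_right _ _, fun R hR => ?_⟩
  have hR1 : 1 ≤ R := (le_max_right _ _).trans hR
  have hR0 : 0 < R := by linarith
  have hs := hR₁ R ((le_max_left _ _).trans hR)
  rw [integral_rpow_mul_cos hξ hR0.le]
  have hmono : c₀ ≤ ∫ s in (0:ℝ)..R, s ^ (ξ - 2) * (1 - Real.cos s) := by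
    refine intervalIntegral.integral_mono_interval le_rfl zero_le_one hR1 ?_
      (intervalIntegrable_rpow_mul_one_sub_cos hξ hR0.le)
    refine (ae_restrict_iff' measurableSet_Ioc).2 (Filter.Eventually.of_forall fun s hs => ?_)
    have h1 := Real.rpow_pos_of_pos hs.1 (ξ - 2)
    have : 0 ≤ 1 - Real.cos s := by linarith [Real.cos_le_one s]
    simp only [Pi.zero_apply]
    positivity
  have h1 : 0 ≤ 1 - Real.cos R := by linarith [Real.cos_le_one R]
  have h2 := Real.rpow_pos_of_pos hR0 (ξ - 1)
  have h3 := Real.rpow_pos_of_pos hR0 ξ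
  have h4 : 0 ≤ -ξ * R ^ (ξ - 1) * (1 - Real.cos R) :=
    mul_nonneg (mul_nonneg (by linarith) h2.le) h1
  have h5 : -(R ^ ξ) ≤ R ^ ξ * Real.sin R := by nlinarith [Real.neg_one_le_sin R]
  have h6 := mul_le_mul_of_nonneg_left hmono hk.le
  linarith

/-- The real part of the oscillatory integral is, by evenness and the substitution `s = lam * t`,
a rescaled incomplete cosine moment. -/
lemma norm_oscillatory_lower {ξ lam : ℝ} (hξ : -1 < ξ) (hl : 0 < lam) :
    2 * lam ^ (-(ξ + 1)) * ∫ s in (0:ℝ)..lam, s ^ ξ * Real.cos s ≤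
      ‖∫ t in Set.Icc (-1 : ℝ) 1, ((|t| ^ ξ : ℝ) : ℂ) * Complex.exp (Complex.I * lam * t)‖ := by
  have hint : IntegrableOn
      (fun t : ℝ => ((|t| ^ ξ : ℝ) : ℂ) * Complex.exp (Complex.I * lam * t)) (Set.Icc (-1) 1) :=
    IntegrableOn.mul_continuousOn (integrableOn_abs_rpow hξ).ofReal (by fun_prop) isCompact_Icc
  have hintR : IntegrableOn (fun t : ℝ => |t| ^ ξ * Real.cos (lam * t)) (Set.Icc (-1) 1) :=
    (integrableOn_abs_rpow hξ).mul_continuousOn (by fun_prop) isCompact_Icc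
  have hI : IntervalIntegrable (fun t : ℝ => |t| ^ ξ * Real.cos (lam * t)) volume (-1) 1 :=
    (intervalIntegrable_iff_integrableOn_Icc_of_le (by norm_num)).2 hintR
  have hre : (∫ t in Set.Icc (-1 : ℝ) 1,
      ((|t| ^ ξ : ℝ) : ℂ) * Complex.exp (Complex.I * lam * t)).re =
      ∫ t in Set.Icc (-1 : ℝ) 1, |t| ^ ξ * Real.cos (lam * t) := by
    have h := integral_re (𝕜 := ℂ) hint
    simp only [RCLike.re_eq_complex_re] at h
    rw [← h]
    congr 1
    ext t
    rw [Complex.re_ofReal_mul, show Complex.I * lam * t = ((lam * t : ℝ) : ℂ) * Complex.I by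
      push_cast; ring, Complex.exp_ofReal_mul_I_re]
  have hhalf : ∫ t in (0:ℝ)..1, |t| ^ ξ * Real.cos (lam * t) =
      lam ^ (-(ξ + 1)) * ∫ s in (0:ℝ)..lam, s ^ ξ * Real.cos s := by
    have h1 : ∫ t in (0:ℝ)..1, |t| ^ ξ * Real.cos (lam * t) =
        ∫ t in (0:ℝ)..1, lam ^ (-ξ) * ((lam * t) ^ ξ * Real.cos (lam * t)) := by
      refine intervalIntegral.integral_congr fun t ht => ?_
      rw [Set.uIcc_of_le zero_le_one] at ht
      rw [abs_of_nonneg ht.1, Real.mul_rpow hl.le ht.1, Real.rpow_neg hl.le]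
      have := (Real.rpow_pos_of_pos hl ξ).ne'
      field_simp
    have h2 := intervalIntegral.mul_integral_comp_mul_left (a := 0) (b := 1)
      (f := fun s : ℝ => s ^ ξ * Real.cos s) lam
    rw [mul_zero, mul_one] at h2
    rw [h1, intervalIntegral.integral_const_mul, ← h2, neg_add, ← sub_eq_add_neg,
      Real.rpow_sub_one hl.ne']
    field_simp
  have hsymm : ∫ t in (-1:ℝ)..0, |t| ^ ξ * Real.cos (lam * t) =
      ∫ t in (0:ℝ)..1, |t| ^ ξ * Real.cos (lam * t) := by
    have := intervalIntegral.integral_comp_neg (a := (0:ℝ)) (b := 1)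
      (fun t : ℝ => |t| ^ ξ * Real.cos (lam * t))
    simpa using this.symm
  have hm : (0:ℝ) ∈ Set.uIcc (-1) 1 := by rw [Set.uIcc_of_le] <;> norm_num
  have hsplit := intervalIntegral.integral_add_adjacent_intervals
    (hI.mono_set (Set.uIcc_subset_uIcc Set.left_mem_uIcc hm))
    (hI.mono_set (Set.uIcc_subset_uIcc hm Set.right_mem_uIcc))
  rw [hsymm, hhalf, intervalIntegral.integral_of_le (a := (-1 : ℝ)) (b := 1) (by norm_num),
    ← integral_Icc_eq_integral_Ioc, ← hre] at hsplit
  calc _ = _ := by rw [← hsplit]; ring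
    _ ≤ _ := (le_abs_self _).trans (Complex.abs_re_le_norm _)

/-- For every `n ≥ 1` and `q ∈ (1,2)` there is `ξ > −1/2` such that the matrix coefficient
`F(λ) = ⟨ĝ_ξ(λ) φ₀^λ, φ₀^λ⟩` satisfies `∫_{ℝ∖{0}} |F(λ)|^q |λ|^n dλ = +∞`. -/
theorem heisenberg_fourier_not_Lq (n : ℕ) (hn : 1 ≤ n) (q : ℝ) (hq1 : 1 < q) (hq2 : q < 2) :
    ∃ ξ : ℝ, -(1 / 2 : ℝ) < ξ ∧
      ∫⁻ lam in ({0}ᶜ : Set ℝ),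
          ENNReal.ofReal (‖heisenbergCoeff n ξ lam‖ ^ q * |lam| ^ n) = ⊤ := by
  have hq0 : 0 < q := by linarith
  -- The critical exponent, for which `|F(lam)| ^ q * |lam| ^ n` decays exactly like `lam⁻¹`.
  obtain ⟨ξ, hξq⟩ : ∃ ξ : ℝ, q * (ξ + 1) = 1 := ⟨1 / q - 1, by field_simp; ring⟩
  have hξ2 : -(1 / 2 : ℝ) < ξ := by nlinarith
  have hξ0 : ξ < 0 := by nlinarith
  have hξ1 : -1 < ξ := by linarith
  refine ⟨ξ, hξ2, ?_⟩
  obtain ⟨c, hc, R₀, hR₀, hosc⟩ := exists_integral_rpow_mul_cos_lower hξ1 hξ0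
  set b : ℝ := Real.exp (-(1 / 4)) / (ξ + 1) with hb
  have hb0 : 0 < b := div_pos (Real.exp_pos _) (by linarith)
  set K : ℝ := 2 * c * (b ^ n) ^ 2 with hK
  have hK0 : 0 < K := by positivity
  have hF : ∀ lam, R₀ ≤ lam → K * lam ^ (-((ξ + 1) * (n + 1))) ≤ ‖heisenbergCoeff n ξ lam‖ := by
    intro lam hlam
    have hl0 : 0 < lam := by linarith
    have h1 := norm_oscillatory_lower hξ1 hl0
    have h2 := gaussian_lower hξ1 (hR₀.trans hlam)
    have h3 := hosc lam hlam
    have p1 := Real.rpow_pos_of_pos hl0 (-(ξ + 1))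
    have p2 := Real.rpow_pos_of_pos hl0 (-((ξ + 1) / 2))
    rw [heisenbergCoeff_eq, norm_mul, Complex.norm_real, Real.norm_of_nonneg (by positivity)]
    calc K * lam ^ (-((ξ + 1) * (n + 1)))
        = (2 * lam ^ (-(ξ + 1)) * c) * ((b * lam ^ (-((ξ + 1) / 2))) ^ n) ^ 2 := by
          have : lam ^ (-((ξ + 1) * (n + 1))) =
              lam ^ (-(ξ + 1)) * ((lam ^ (-((ξ + 1) / 2))) ^ n) ^ 2 := by
            rw [← pow_mul, ← Real.rpow_natCast, ← Real.rpow_mul hl0.le, ← Real.rpow_add hl0]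
            congr 1
            push_cast
            ring
          rw [this, hK]
          ring
      _ ≤ _ := by
          refine mul_le_mul (le_trans ?_ h1) ?_ (by positivity) (norm_nonneg _)
          · gcongr
          · gcongr
  have hbound : ∀ lam ∈ Set.Ioi R₀,
      ENNReal.ofReal (K ^ q) * ENNReal.ofReal lam⁻¹ ≤
        ENNReal.ofReal (‖heisenbergCoeff n ξ lam‖ ^ q * |lam| ^ n) := by
    intro lam hlam
    have hlam' : R₀ ≤ lam := le_of_lt hlam
    have hl0 : 0 < lam := by linarith
    rw [← ENNReal.ofReal_mul (by positivity)]
    apply ENNReal.ofReal_le_ofReal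
    have p := Real.rpow_pos_of_pos hl0 (-((ξ + 1) * (n + 1)))
    calc K ^ q * lam⁻¹ = (K * lam ^ (-((ξ + 1) * (n + 1)))) ^ q * |lam| ^ n := by
          rw [Real.mul_rpow hK0.le p.le, ← Real.rpow_mul hl0.le, abs_of_pos hl0,
            ← Real.rpow_natCast lam n, mul_assoc, ← Real.rpow_add hl0, ← Real.rpow_neg_one]
          congr 2
          linear_combination (n + 1 : ℝ) * hξq
      _ ≤ _ := by
          gcongr
          exact hF lam hlam'
  have hinv : ∫⁻ lam in Set.Ioi R₀, ENNReal.ofReal lam⁻¹ = ⊤ := by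
    by_contra hne
    refine not_integrableOn_Ioi_inv (a := R₀) ⟨by fun_prop, ?_⟩
    rw [hasFiniteIntegral_iff_ofReal]
    · exact lt_top_iff_ne_top.2 hne
    · refine (ae_restrict_iff' measurableSet_Ioi).2 (Filter.Eventually.of_forall fun s hs => ?_)
      have : R₀ < s := hs
      simp only [Pi.zero_apply]
      exact inv_nonneg.2 (by linarith)
  rw [eq_top_iff]
  calc ⊤ = ∫⁻ lam in Set.Ioi R₀, ENNReal.ofReal (K ^ q) * ENNReal.ofReal lam⁻¹ := by
        rw [lintegral_const_mul _ (by fun_prop), hinv, ENNReal.mul_top]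
        simpa using Real.rpow_pos_of_pos hK0 q
    _ ≤ ∫⁻ lam in Set.Ioi R₀, ENNReal.ofReal (‖heisenbergCoeff n ξ lam‖ ^ q * |lam| ^ n) :=
        setLIntegral_mono' measurableSet_Ioi hbound
    _ ≤ _ := lintegral_mono_set fun s hs => by
        have : R₀ < s := hs
        simp only [Set.mem_compl_iff, Set.mem_singleton_iff]
        linarith
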